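/- Dual representation of the optimized certainty equivalent: Let l satisfy assumption (Al) and let X be a random variable on a probability space (Ω, 𝔉, P) that is bounded from below. Then ρ(X) = inf_{r ∈ ℝ} (E[l(X − r)] + r) = sup { E[Z·X − l*(Z)] : Z integrable, Z ≥ 0 P-a.s., E[Z] = 1 }, where E[ξ] := +∞ whenever E[ξ⁺] = +∞ (note that Z·X − l*(Z) ≤ l(X) pointwise by the Fenchel–Young inequality, so each expectation on the right-hand side is well defined in [−∞, +∞]). -/

import Mathlib

/-!
The inequality `≥` is weak duality: by Fenchel–Young, `Z X - l*(Z) ≤ l (X - r) + r Z` pointwise, and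
`E[Z] = 1`.

For `≤`, suppose first that `X` is bounded. Then `φ r = E[l (X - r)] + r` is a finite convex function
of `r`, and it is coercive because `l x - x` grows linearly in `|x|`
(`IsLossFunction.exists_linear_growth`). At a minimizer `r`, comparing `φ r` with `φ (r ± h)` and
letting `h → 0` gives `E[l'₋ (X - r)] ≤ 1 ≤ E[l'₊ (X - r)]`. A convex combination `Z` of these two
one-sided derivatives has mean `1` and is a subgradient of `l` at `X - r`, so Fenchel–Young is an
equality for `Z` and `E[Z X - l*(Z)] = φ r` (`exists_density_of_bounded`).

For `X` only bounded from below, this is applied to the truncations `Xₙ = min X (c + n)`, giving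
`rₙ` and `Zₙ ≥ 0` with `E[l (Xₙ - rₙ)] + rₙ = E[Zₙ Xₙ - l*(Zₙ)] ≤ E[Zₙ X - l*(Zₙ)] ≤ M`, where `M` is
the supremum on the dual side, which may be assumed finite. Coercivity, uniform in `n`, bounds the
`rₙ`; along a convergent subsequence `rₙ → r`, Fatou's lemma yields `E[l (X - r)] + r ≤ M`.
-/

noncomputable section

open MeasureTheory Set Filter
open scoped ENNReal NNReal

/-- The positive part of an extended real number, valued in `ℝ≥0∞`. -/
def EReal.posPart' (x : EReal) : ℝ≥0∞ := if x = ⊤ then ⊤ else ENNReal.ofReal x.toReal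

/-- Extended expectation of an `EReal`-valued random variable, with the convention
`E[ξ] := +∞` whenever `E[ξ⁺] = +∞` (and otherwise `E[ξ] = E[ξ⁺] − E[ξ⁻] ∈ [−∞, +∞)`). -/
def eexp {Ω : Type*} [MeasurableSpace Ω] (P : Measure Ω) (f : Ω → EReal) : EReal :=
  if (∫⁻ ω, (f ω).posPart' ∂P) = ⊤ then ⊤
  else ((∫⁻ ω, (f ω).posPart' ∂P : ℝ≥0∞) : EReal)
    - ((∫⁻ ω, (-(f ω)).posPart' ∂P : ℝ≥0∞) : EReal)

/-- The convex conjugate `l*(z) = sup_x (x z − l(x))`, valued in `ℝ ∪ {+∞}`. -/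
def lstar (l : ℝ → ℝ) (z : ℝ) : EReal := ⨆ x : ℝ, ((x * z - l x : ℝ) : EReal)

/-- Assumption (Al): `l` is a loss function, i.e. nondecreasing, convex, bounded from below,
with `l(0) = 0`, `l*(1) = 0`, and `l(x) > x` for all sufficiently large `|x|`. -/
def IsLossFunction (l : ℝ → ℝ) : Prop :=
  Monotone l ∧ ConvexOn ℝ Set.univ l ∧ BddBelow (Set.range l) ∧ l 0 = 0 ∧
    lstar l 1 = 0 ∧ ∃ K : ℝ, ∀ x : ℝ, K ≤ |x| → x < l x

/-- The optimized certainty equivalent `ρ(X) = inf_{r ∈ ℝ} (E[l(X − r)] + r)`. -/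
def oce {Ω : Type*} [MeasurableSpace Ω] (P : Measure Ω) (l : ℝ → ℝ) (X : Ω → ℝ) : EReal :=
  ⨅ r : ℝ, eexp P (fun ω => ((l (X ω - r) : ℝ) : EReal)) + (r : EReal)


/-! ### Convex analysis of loss functions -/

/-- The left derivative `gl` and right derivative `gr` of a finite convex function are monotone, are
subgradients, and are limits of difference quotients with step `1 / (n + 1)`. -/
lemma ConvexOn.exists_one_sided_subgradients {l : ℝ → ℝ} (hl : ConvexOn ℝ univ l) :
    ∃ gl gr : ℝ → ℝ, Monotone gl ∧ Monotone gr ∧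
      (∀ x y, l x + gl x * (y - x) ≤ l y) ∧ (∀ x y, l x + gr x * (y - x) ≤ l y) ∧
      (∀ x, Tendsto (fun n : ℕ => (l x - l (x - 1 / ((n : ℝ) + 1))) * ((n : ℝ) + 1)) atTop
        (nhds (gl x))) ∧
      (∀ x, Tendsto (fun n : ℕ => (l (x + 1 / ((n : ℝ) + 1)) - l x) * ((n : ℝ) + 1)) atTop
        (nhds (gr x))) := by
  have hint : ∀ x : ℝ, x ∈ interior (univ : Set ℝ) := fun x => by simp
  have hle : ∀ x, derivWithin l (Iio x) x ≤ derivWithin l (Ioi x) x := fun x =>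
    hl.leftDeriv_le_rightDeriv_of_mem_interior (hint x)
  have hright : ∀ x y, x < y → derivWithin l (Ioi x) x * (y - x) ≤ l y - l x := by
    intro x y hxy
    have h := hl.rightDeriv_le_slope_of_mem_interior (hint x) (mem_univ y) hxy
    rw [slope_def_field, le_div_iff₀ (by linarith)] at h
    exact h
  have hleft : ∀ x y, y < x → l x - l y ≤ derivWithin l (Iio x) x * (x - y) := by
    intro x y hxy
    have h := hl.slope_le_leftDeriv_of_mem_interior (mem_univ y) (hint x) hxy
    rw [slope_def_field, div_le_iff₀ (by linarith)] at h
    exact h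
  have hpos : ∀ n : ℕ, (0 : ℝ) < 1 / ((n : ℝ) + 1) := fun n => Nat.one_div_pos_of_nat
  refine ⟨fun x => derivWithin l (Iio x) x, fun x => derivWithin l (Ioi x) x, ?_, ?_, ?_, ?_,
    ?_, ?_⟩
  · have := hl.monotoneOn_leftDeriv
    rwa [interior_univ, monotoneOn_univ] at this
  · have := hl.monotoneOn_rightDeriv
    rwa [interior_univ, monotoneOn_univ] at this
  · intro x y
    rcases lt_trichotomy x y with h | rfl | h
    · nlinarith [hright x y h, hle x]
    · simp
    · nlinarith [hleft x y h]
  · intro x y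
    rcases lt_trichotomy x y with h | rfl | h
    · nlinarith [hright x y h]
    · simp
    · nlinarith [hleft x y h, hle x]
  · intro x
    have h := (hasDerivWithinAt_iff_tendsto_slope' self_notMem_Iio).mp
      (hl.hasDerivWithinAt_leftDeriv_of_mem_interior (hint x))
    have ht : Tendsto (fun n : ℕ => x - 1 / ((n : ℝ) + 1)) atTop (nhdsWithin x (Iio x)) := by
      refine tendsto_nhdsWithin_iff.mpr ⟨?_, Eventually.of_forall fun n => ?_⟩
      · simpa using (tendsto_const_nhds (x := x)).sub
          (tendsto_one_div_add_atTop_nhds_zero_nat (𝕜 := ℝ))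
      · simpa using hpos n
    refine (h.comp ht).congr fun n => ?_
    have : (n : ℝ) + 1 ≠ 0 := by positivity
    simp only [Function.comp, slope_def_field]
    field_simp
    ring
  · intro x
    have h := (hasDerivWithinAt_iff_tendsto_slope' self_notMem_Ioi).mp
      (hl.hasDerivWithinAt_rightDeriv_of_mem_interior (hint x))
    have ht : Tendsto (fun n : ℕ => x + 1 / ((n : ℝ) + 1)) atTop (nhdsWithin x (Ioi x)) := by
      refine tendsto_nhdsWithin_iff.mpr ⟨?_, Eventually.of_forall fun n => ?_⟩
      · simpa using (tendsto_const_nhds (x := x)).add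
          (tendsto_one_div_add_atTop_nhds_zero_nat (𝕜 := ℝ))
      · simpa using hpos n
    refine (h.comp ht).congr fun n => ?_
    have : (n : ℝ) + 1 ≠ 0 := by positivity
    simp only [Function.comp, slope_def_field]
    field_simp
    ring

/-- Linear growth of `l x - x`: it vanishes at `0`, is nonnegative since `l*(1) = 0`, and is
positive far out, so convexity forces growth at a positive rate in both directions. -/
lemma IsLossFunction.exists_linear_growth {l : ℝ → ℝ} (hl : IsLossFunction l) :
    ∃ ε > 0, ∃ K : ℝ, ∀ x, x + ε * (|x| - K) ≤ l x := by
  obtain ⟨-, hconv, -, h0, hstar, K, hK⟩ := hl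
  have hnn : ∀ x, x ≤ l x := by
    intro x
    have h : ((x * 1 - l x : ℝ) : EReal) ≤ lstar l 1 :=
      le_iSup (fun x : ℝ => ((x * 1 - l x : ℝ) : EReal)) x
    rw [hstar] at h
    have : x * 1 - l x ≤ 0 := by exact_mod_cast h
    linarith
  set k := max K 1 with hk
  have hk1 : 1 ≤ k := le_max_right _ _
  have hkp : k < l k := hK k (by rw [abs_of_pos (by linarith)]; exact le_max_left _ _)
  have hkn : -k < l (-k) := hK (-k) (by rw [abs_neg, abs_of_pos (by linarith)]; exact le_max_left _ _)
  set δ := min (l k - k) (l (-k) + k) with hδ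
  have hδ0 : 0 < δ := lt_min (by linarith) (by linarith)
  have key : ∀ a x : ℝ, k ≤ |x| → a * |x| = x * k → δ ≤ l a - a → δ * |x| ≤ k * (l x - x) := by
    intro a x hx hax ha
    have hxp : 0 < |x| := by linarith
    have h := hconv.2 (mem_univ x) (mem_univ 0) (show 0 ≤ k / |x| by positivity)
      (show 0 ≤ 1 - k / |x| by rw [sub_nonneg, div_le_one hxp]; exact hx) (by ring)
    simp only [smul_eq_mul, h0, mul_zero, add_zero] at h
    have hxa : k / |x| * x = a := by field_simp; linarith
    rw [hxa] at h
    have h2 : |x| * l a ≤ k * l x := by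
      have := mul_le_mul_of_nonneg_left h hxp.le
      rwa [show |x| * (k / |x| * l x) = k * l x by field_simp] at this
    nlinarith
  refine ⟨δ / k, by positivity, k, fun x => ?_⟩
  rcases le_total k |x| with hx | hx
  · have : δ * |x| ≤ k * (l x - x) := by
      rcases le_total 0 x with h | h
      · exact key k x hx (by rw [abs_of_nonneg h]; ring) (min_le_left _ _)
      · exact key (-k) x hx (by rw [abs_of_nonpos h]; ring)
          ((min_le_right _ _).trans_eq (sub_neg_eq_add _ _).symm)
    have h2 : δ / k * |x| ≤ l x - x := by
      rw [div_mul_eq_mul_div, div_le_iff₀ (by linarith)]; linarith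
    have : 0 ≤ δ / k * k := by positivity
    linarith
  · have : δ / k * (|x| - k) ≤ 0 := mul_nonpos_of_nonneg_of_nonpos (by positivity) (by linarith)
    linarith [hnn x]

/-! ### The extended expectation -/

lemma EReal.posPart'_mono {x y : EReal} (h : x ≤ y) : x.posPart' ≤ y.posPart' := by
  unfold EReal.posPart'
  split_ifs with h1 h2 h2
  · exact le_rfl
  · exact absurd (top_le_iff.mp (h1 ▸ h)) h2
  · exact le_top
  · induction x with
    | bot => simp
    | top => exact absurd rfl h1
    | coe x =>
      induction y with
      | bot => simp at h
      | top => exact absurd rfl h2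
      | coe y => exact ENNReal.ofReal_le_ofReal (by simpa using h)

lemma EReal.posPart'_coe (x : ℝ) : (x : EReal).posPart' = ENNReal.ofReal x := by
  simp [EReal.posPart']

section Expectation

variable {Ω : Type*} [MeasurableSpace Ω] {P : Measure Ω}

/-- No measurability is needed here, since `lintegral` is monotone on all functions. -/
lemma eexp_mono {f g : Ω → EReal} (h : ∀ᵐ ω ∂P, f ω ≤ g ω) : eexp P f ≤ eexp P g := by
  have hp : ∫⁻ ω, (f ω).posPart' ∂P ≤ ∫⁻ ω, (g ω).posPart' ∂P :=
    lintegral_mono_ae (h.mono fun ω hω => EReal.posPart'_mono hω)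
  have hn : ∫⁻ ω, (-(g ω)).posPart' ∂P ≤ ∫⁻ ω, (-(f ω)).posPart' ∂P :=
    lintegral_mono_ae (h.mono fun ω hω => EReal.posPart'_mono (EReal.neg_le_neg_iff.mpr hω))
  unfold eexp
  split_ifs with h1 h2 h2
  · exact le_rfl
  · exact absurd (top_le_iff.mp (h1 ▸ hp)) h2
  · exact le_top
  · exact EReal.sub_le_sub (by exact_mod_cast hp) (by exact_mod_cast hn)

lemma eexp_coe_of_integrable {f : Ω → ℝ} (hf : Integrable f P) :
    eexp P (fun ω => (f ω : EReal)) = ((∫ ω, f ω ∂P : ℝ) : EReal) := by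
  have h1 : ∫⁻ ω, ENNReal.ofReal (f ω) ∂P ≠ ⊤ := hf.lintegral_lt_top.ne
  have h2 : ∫⁻ ω, ENNReal.ofReal (-f ω) ∂P ≠ ⊤ := hf.neg.lintegral_lt_top.ne
  unfold eexp
  simp only [← EReal.coe_neg, EReal.posPart'_coe]
  rw [if_neg h1, integral_eq_lintegral_pos_part_sub_lintegral_neg_part hf, EReal.coe_sub,
    EReal.coe_ennreal_toReal h1, EReal.coe_ennreal_toReal h2]

lemma eexp_coe_of_not_integrable [IsFiniteMeasure P] {f : Ω → ℝ} (hf : Measurable f) {m : ℝ}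
    (hm : ∀ ω, m ≤ f ω) (hni : ¬ Integrable f P) :
    eexp P (fun ω => (f ω : EReal)) = ⊤ := by
  unfold eexp
  simp only [EReal.posPart'_coe]
  refine if_pos ?_
  by_contra htop
  apply hni
  have hpos : Integrable (fun ω => max (f ω) 0) P := by
    refine ⟨(hf.max measurable_const).aestronglyMeasurable, ?_⟩
    have h0 : 0 ≤ᵐ[P] fun ω => max (f ω) 0 := Eventually.of_forall fun ω => le_max_right _ _
    rw [hasFiniteIntegral_iff_ofReal h0]
    simpa [ENNReal.ofReal_max] using lt_top_iff_ne_top.mpr htop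
  refine (hpos.add (integrable_const |m|)).mono' hf.aestronglyMeasurable
    (Eventually.of_forall fun ω => ?_)
  have := hm ω
  simp only [Pi.add_apply, Real.norm_eq_abs]
  rw [abs_le]
  constructor
  · linarith [le_max_right (f ω) 0, neg_abs_le m]
  · linarith [le_max_left (f ω) 0, abs_nonneg m]

end Expectation

/-! ### Fenchel–Young -/

lemma lstar_le_of_subgradient {l : ℝ → ℝ} {x z : ℝ} (h : ∀ y, l x + z * (y - x) ≤ l y) :
    lstar l z ≤ ((z * x - l x : ℝ) : EReal) :=
  iSup_le fun y => EReal.coe_le_coe_iff.mpr (by linarith [h y])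

/-- The Fenchel–Young inequality `x z ≤ l x + l*(z)`, rearranged to allow for `l*(z) = +∞` and an
arbitrary real `w` in place of `x z`. -/
lemma sub_lstar_le (l : ℝ → ℝ) (w x z : ℝ) :
    (w : EReal) - lstar l z ≤ ((l x + (w - x * z) : ℝ) : EReal) := by
  have h : ((x * z - l x : ℝ) : EReal) ≤ lstar l z :=
    le_iSup (fun x : ℝ => ((x * z - l x : ℝ) : EReal)) x
  calc (w : EReal) - lstar l z ≤ (w : EReal) - ((x * z - l x : ℝ) : EReal) :=
        EReal.sub_le_sub le_rfl h
    _ = ((l x + (w - x * z) : ℝ) : EReal) := by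
        rw [← EReal.coe_sub]; congr 1; ring

/-! ### Bounded random variables -/

lemma integrable_loss_sub {Ω : Type*} [MeasurableSpace Ω] {P : Measure Ω} [IsProbabilityMeasure P]
    {l : ℝ → ℝ} (hmono : Monotone l) {Y : Ω → ℝ} (hY : Measurable Y) {c b : ℝ}
    (hc : ∀ ω, c ≤ Y ω) (hb : ∀ ω, Y ω ≤ b) (s : ℝ) : Integrable (fun ω => l (Y ω - s)) P :=
  Integrable.of_mem_Icc (l (c - s)) (l (b - s))
    (hmono.measurable.comp (hY.sub_const s)).aemeasurable
    (Eventually.of_forall fun ω =>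
      ⟨hmono (by linarith [hc ω]), hmono (by linarith [hb ω])⟩)

/-- A lower bound on `E[l (Y - s)] + s` depending on `Y` only through its lower bound `c`. -/
lemma growth_le_integral {Ω : Type*} [MeasurableSpace Ω] {P : Measure Ω} [IsProbabilityMeasure P]
    {l : ℝ → ℝ} (hmono : Monotone l) {ε K : ℝ} (hgrowth : ∀ x, x + ε * (|x| - K) ≤ l x)
    {Y : Ω → ℝ} {c : ℝ} (hc : ∀ ω, c ≤ Y ω) (s : ℝ)
    (hint : Integrable (fun ω => l (Y ω - s)) P) :
    c + ε * (|c - s| - K) ≤ ∫ ω, l (Y ω - s) ∂P + s := by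
  have h : ∫ _, l (c - s) ∂P ≤ ∫ ω, l (Y ω - s) ∂P :=
    integral_mono (integrable_const _) hint fun ω => hmono (by linarith [hc ω])
  simp only [integral_const, probReal_univ, one_smul] at h
  linarith [hgrowth (c - s)]

/-- Existence of a minimizer in the primal problem for bounded `Y`. -/
lemma exists_minimizer_of_bounded {Ω : Type*} [MeasurableSpace Ω] (P : Measure Ω)
    [IsProbabilityMeasure P] {l : ℝ → ℝ} (hl : IsLossFunction l) {Y : Ω → ℝ} (hY : Measurable Y)
    {c b : ℝ} (hc : ∀ ω, c ≤ Y ω) (hb : ∀ ω, Y ω ≤ b) :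
    ∃ r : ℝ, ∀ s, ∫ ω, l (Y ω - r) ∂P + r ≤ ∫ ω, l (Y ω - s) ∂P + s := by
  obtain ⟨ε, hε, K, hgrowth⟩ := hl.exists_linear_growth
  have hint := integrable_loss_sub (P := P) hl.1 hY hc hb
  set φ : ℝ → ℝ := fun s => ∫ ω, l (Y ω - s) ∂P + s with hφ
  have hconv : ConvexOn ℝ univ φ := by
    refine ⟨convex_univ, fun x _ y _ α β hα hβ hαβ => ?_⟩
    have h : ∫ ω, l (Y ω - (α * x + β * y)) ∂P
        ≤ ∫ ω, (α * l (Y ω - x) + β * l (Y ω - y)) ∂P := by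
      refine integral_mono (hint _) (((hint x).const_mul α).add ((hint y).const_mul β))
        fun ω => ?_
      have h := hl.2.1.2 (mem_univ (Y ω - x)) (mem_univ (Y ω - y)) hα hβ hαβ
      simp only [smul_eq_mul] at h
      have he : α * (Y ω - x) + β * (Y ω - y) = Y ω - (α * x + β * y) := by
        linear_combination Y ω * hαβ
      rwa [he] at h
    rw [integral_add ((hint x).const_mul α) ((hint y).const_mul β), integral_const_mul,
      integral_const_mul] at h
    simp only [hφ, smul_eq_mul]
    linarith
  have hcont : Continuous φ := by
    have := hconv.continuousOn_interior
    rwa [interior_univ, continuousOn_univ] at this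
  refine hcont.exists_forall_le_of_isBounded 0 ?_
  refine (Metric.isBounded_closedBall (x := c) (r := (φ 0 - c) / ε + K)).subset fun s hs => ?_
  have h1 := growth_le_integral hl.1 hgrowth hc s (hint s)
  have h2 : φ s ≤ φ 0 := hs
  rw [Metric.mem_closedBall, Real.dist_eq, abs_sub_comm, ← sub_le_iff_le_add, le_div_iff₀ hε]
  simp only [hφ] at h1 h2 ⊢
  linarith

/-- For bounded `Y`, the dual problem is solved by a density `Z` that is a subgradient of `l` at
`Y - r`, so that equality holds in the Fenchel–Young inequality. -/
lemma exists_density_of_bounded {Ω : Type*} [MeasurableSpace Ω] (P : Measure Ω)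
    [IsProbabilityMeasure P] {l : ℝ → ℝ} (hl : IsLossFunction l) {Y : Ω → ℝ} (hY : Measurable Y)
    {c b : ℝ} (hc : ∀ ω, c ≤ Y ω) (hb : ∀ ω, Y ω ≤ b) :
    ∃ (r : ℝ) (Z : Ω → ℝ), Integrable Z P ∧ (∀ ω, 0 ≤ Z ω) ∧ ∫ ω, Z ω ∂P = 1 ∧
      ∀ ω, lstar l (Z ω) ≤ ((Z ω * (Y ω - r) - l (Y ω - r) : ℝ) : EReal) := by
  obtain ⟨r, hr⟩ := exists_minimizer_of_bounded P hl hY hc hb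
  have hmono := hl.1
  obtain ⟨gl, gr, hglm, hgrm, hgl, hgr, hglt, hgrt⟩ := hl.2.1.exists_one_sided_subgradients
  have hint := integrable_loss_sub (P := P) hmono hY hc hb
  have hnonneg : ∀ g : ℝ → ℝ, (∀ x y, l x + g x * (y - x) ≤ l y) → ∀ x, 0 ≤ g x := by
    intro g hg x
    have h1 := hg x (x - 1)
    have h2 := hmono (show x - 1 ≤ x by linarith)
    linarith
  have hgint : ∀ g : ℝ → ℝ, Monotone g → (∀ x y, l x + g x * (y - x) ≤ l y) →
      Integrable (fun ω => g (Y ω - r)) P := by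
    intro g hgm hg
    exact Integrable.of_mem_Icc 0 (g (b - r)) (hgm.measurable.comp (hY.sub_const r)).aemeasurable
      (Eventually.of_forall fun ω => ⟨hnonneg g hg _, hgm (by linarith [hb ω])⟩)
  have hpos : ∀ n : ℕ, (0 : ℝ) < 1 / ((n : ℝ) + 1) := fun n => Nat.one_div_pos_of_nat
  have hle1 : ∀ n : ℕ, 1 / ((n : ℝ) + 1) ≤ 1 := fun n => by
    rw [div_le_one (by positivity)]; linarith [n.cast_nonneg (α := ℝ)]
  have hmul : ∀ n : ℕ, 1 / ((n : ℝ) + 1) * ((n : ℝ) + 1) = 1 := fun n => by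
    field_simp
  have hlm : Measurable l := hmono.measurable
  -- All difference quotients below are dominated by a subgradient at `b - r + 1`.
  set L := gr (b - r + 1) with hL
  have hquot : ∀ (n : ℕ) (y : ℝ), y ≤ b - r + 1 →
      ‖(l y - l (y - 1 / ((n : ℝ) + 1))) * ((n : ℝ) + 1)‖ ≤ L := by
    intro n y hy
    have hn : (0 : ℝ) ≤ (n : ℝ) + 1 := by positivity
    have h0 : l (y - 1 / ((n : ℝ) + 1)) ≤ l y := hmono (by linarith [hpos n])
    rw [Real.norm_eq_abs, abs_of_nonneg (mul_nonneg (by linarith) hn)]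
    have h1 := hgr y (y - 1 / ((n : ℝ) + 1))
    have h2 : l y - l (y - 1 / ((n : ℝ) + 1)) ≤ gr y * (1 / ((n : ℝ) + 1)) := by linarith
    calc (l y - l (y - 1 / ((n : ℝ) + 1))) * ((n : ℝ) + 1)
        ≤ gr y * (1 / ((n : ℝ) + 1)) * ((n : ℝ) + 1) := mul_le_mul_of_nonneg_right h2 hn
      _ = gr y := by rw [mul_assoc, hmul, mul_one]
      _ ≤ L := hgrm hy
  -- Optimality against `r + h`, with `h = 1 / (n + 1)`.
  have hA : ∫ ω, gl (Y ω - r) ∂P ≤ 1 := by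
    have ht := tendsto_integral_of_dominated_convergence (μ := P)
      (F := fun (n : ℕ) ω => (l (Y ω - r) - l (Y ω - r - 1 / ((n : ℝ) + 1))) * ((n : ℝ) + 1))
      (f := fun ω => gl (Y ω - r)) (fun _ => L)
      (fun n => by
        have : Measurable fun ω =>
            (l (Y ω - r) - l (Y ω - r - 1 / ((n : ℝ) + 1))) * ((n : ℝ) + 1) := by fun_prop
        exact this.aestronglyMeasurable)
      (integrable_const L)
      (fun n => Eventually.of_forall fun ω => hquot n _ (by linarith [hb ω]))
      (Eventually.of_forall fun ω => hglt _)
    refine le_of_tendsto' ht fun n => ?_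
    have h := hr (r + 1 / ((n : ℝ) + 1))
    simp only [← sub_sub] at h
    have hi := hint (r + 1 / ((n : ℝ) + 1))
    simp only [← sub_sub] at hi
    rw [integral_mul_const, integral_sub (hint r) hi]
    calc _ ≤ 1 / ((n : ℝ) + 1) * ((n : ℝ) + 1) :=
          mul_le_mul_of_nonneg_right (by linarith) (by positivity)
      _ = 1 := hmul n
  -- Optimality against `r - h`.
  have hB : 1 ≤ ∫ ω, gr (Y ω - r) ∂P := by
    have ht := tendsto_integral_of_dominated_convergence (μ := P)
      (F := fun (n : ℕ) ω => (l (Y ω - r + 1 / ((n : ℝ) + 1)) - l (Y ω - r)) * ((n : ℝ) + 1))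
      (f := fun ω => gr (Y ω - r)) (fun _ => L)
      (fun n => by
        have : Measurable fun ω =>
            (l (Y ω - r + 1 / ((n : ℝ) + 1)) - l (Y ω - r)) * ((n : ℝ) + 1) := by fun_prop
        exact this.aestronglyMeasurable)
      (integrable_const L)
      (fun n => Eventually.of_forall fun ω => by
        have h := hquot n (Y ω - r + 1 / ((n : ℝ) + 1)) (by linarith [hb ω, hle1 n])
        rwa [add_sub_cancel_right] at h)
      (Eventually.of_forall fun ω => hgrt _)
    refine ge_of_tendsto' ht fun n => ?_
    have h := hr (r - 1 / ((n : ℝ) + 1))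
    simp only [← sub_add] at h
    have hi := hint (r - 1 / ((n : ℝ) + 1))
    simp only [← sub_add] at hi
    rw [integral_mul_const, integral_sub hi (hint r)]
    calc (1 : ℝ) = 1 / ((n : ℝ) + 1) * ((n : ℝ) + 1) := (hmul n).symm
      _ ≤ _ := mul_le_mul_of_nonneg_right (by linarith) (by positivity)
  have hli := hgint gl hglm hgl
  have hri := hgint gr hgrm hgr
  obtain ⟨α, β, hα, hβ, hαβ, hsum⟩ : ∃ α β : ℝ, 0 ≤ α ∧ 0 ≤ β ∧ α + β = 1 ∧
      α * ∫ ω, gl (Y ω - r) ∂P + β * ∫ ω, gr (Y ω - r) ∂P = 1 := by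
    have h1 : (1 : ℝ) ∈ segment ℝ (∫ ω, gl (Y ω - r) ∂P) (∫ ω, gr (Y ω - r) ∂P) := by
      rw [segment_eq_Icc (hA.trans hB)]
      exact ⟨hA, hB⟩
    simpa [segment] using h1
  refine ⟨r, fun ω => α * gl (Y ω - r) + β * gr (Y ω - r),
    (hli.const_mul α).add (hri.const_mul β), fun ω => ?_, ?_, fun ω => ?_⟩
  · exact add_nonneg (mul_nonneg hα (hnonneg gl hgl _)) (mul_nonneg hβ (hnonneg gr hgr _))
  · rw [integral_add (hli.const_mul α) (hri.const_mul β), integral_const_mul, integral_const_mul,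
      hsum]
  · refine lstar_le_of_subgradient fun y => ?_
    have h1 := mul_le_mul_of_nonneg_left (hgl (Y ω - r) y) hα
    have h2 := mul_le_mul_of_nonneg_left (hgr (Y ω - r) y) hβ
    linear_combination h1 + h2 + (l y - l (Y ω - r)) * hαβ

/-! ### Removing the upper bound -/

/-- Passage to the limit in the truncated problems: a uniform bound on the objective along any choice
of points `r n` is inherited, by coercivity and Fatou's lemma, by the untruncated problem at a limit
point of `r`. -/
lemma exists_primal_le_of_truncations {Ω : Type*} [MeasurableSpace Ω] (P : Measure Ω)
    [IsProbabilityMeasure P] {l : ℝ → ℝ} (hl : IsLossFunction l) {X : Ω → ℝ} (hX : Measurable X)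
    {c M : ℝ} (hc : ∀ ω, c ≤ X ω) (r : ℕ → ℝ)
    (hr : ∀ n : ℕ, ∫ ω, l (min (X ω) (c + n) - r n) ∂P + r n ≤ M) :
    ∃ s : ℝ, Integrable (fun ω => l (X ω - s)) P ∧ ∫ ω, l (X ω - s) ∂P + s ≤ M := by
  obtain ⟨ε, hε, K, hgrowth⟩ := hl.exists_linear_growth
  obtain ⟨m, hm⟩ := hl.2.2.1
  have hm : ∀ x, m ≤ l x := fun x => hm (mem_range_self x)
  have hlm : Measurable l := hl.1.measurable
  have hlc : Continuous l := by
    have := hl.2.1.continuousOn_interior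
    rwa [interior_univ, continuousOn_univ] at this
  have hcn : ∀ (n : ℕ) ω, c ≤ min (X ω) (c + n) := fun n ω =>
    le_min (hc ω) (by linarith [n.cast_nonneg (α := ℝ)])
  have hint : ∀ n : ℕ, Integrable (fun ω => l (min (X ω) (c + n) - r n)) P := fun n =>
    integrable_loss_sub hl.1 (hX.min measurable_const) (hcn n) (fun ω => min_le_right _ _) (r n)
  have hbd : ∀ n, r n ∈ Metric.closedBall c ((M - c) / ε + K) := by
    intro n
    have h1 := growth_le_integral hl.1 hgrowth (hcn n) (r n) (hint n)
    rw [Metric.mem_closedBall, Real.dist_eq, abs_sub_comm, ← sub_le_iff_le_add, le_div_iff₀ hε]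
    linarith [hr n]
  obtain ⟨s, -, k, hk, hks⟩ := tendsto_subseq_of_bounded Metric.isBounded_closedBall hbd
  have hlim : ∀ ω, Tendsto
      (fun j => ENNReal.ofReal (l (min (X ω) (c + k j) - r (k j)) - m)) atTop
      (nhds (ENNReal.ofReal (l (X ω - s) - m))) := by
    intro ω
    have h1 : Tendsto (fun j => min (X ω) (c + (k j : ℝ))) atTop (nhds (X ω)) := by
      have h2 : Tendsto (fun j => c + (k j : ℝ)) atTop atTop :=
        tendsto_atTop_add_const_left _ _ (tendsto_natCast_atTop_atTop.comp hk.tendsto_atTop)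
      refine tendsto_const_nhds.congr' ?_
      filter_upwards [h2.eventually_ge_atTop (X ω)] with j hj
      exact (min_eq_left hj).symm
    exact (ENNReal.continuous_ofReal.tendsto _).comp
      (((hlc.tendsto _).comp (h1.sub hks)).sub_const m)
  have hfatou : ∫⁻ ω, ENNReal.ofReal (l (X ω - s) - m) ∂P ≤ ENNReal.ofReal (M - s - m) := by
    calc ∫⁻ ω, ENNReal.ofReal (l (X ω - s) - m) ∂P
        = ∫⁻ ω, liminf (fun j => ENNReal.ofReal (l (min (X ω) (c + k j) - r (k j)) - m)) atTop ∂P :=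
          lintegral_congr fun ω => (hlim ω).liminf_eq.symm
      _ ≤ liminf (fun j => ∫⁻ ω, ENNReal.ofReal (l (min (X ω) (c + k j) - r (k j)) - m) ∂P)
            atTop := lintegral_liminf_le fun j => by fun_prop
      _ ≤ liminf (fun j => ENNReal.ofReal (M - r (k j) - m)) atTop := by
          refine liminf_le_liminf (Eventually.of_forall fun j => ?_)
          rw [← ofReal_integral_eq_lintegral_ofReal
            (f := fun ω => l (min (X ω) (c + k j) - r (k j)) - m)
            ((hint (k j)).sub (integrable_const m))
            (Eventually.of_forall fun ω => sub_nonneg.mpr (hm _))]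
          refine ENNReal.ofReal_le_ofReal ?_
          rw [integral_sub (hint (k j)) (integrable_const m)]
          simp only [integral_const, probReal_univ, one_smul]
          linarith [hr (k j)]
      _ = ENNReal.ofReal (M - s - m) :=
          ((ENNReal.continuous_ofReal.tendsto _).comp
            ((tendsto_const_nhds.sub hks).sub_const m)).liminf_eq
  have hnn : 0 ≤ᵐ[P] fun ω => l (X ω - s) - m := Eventually.of_forall fun ω => sub_nonneg.mpr (hm _)
  have hmeas : Measurable fun ω => l (X ω - s) - m := by fun_prop
  have hi : Integrable (fun ω => l (X ω - s) - m) P :=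
    ⟨hmeas.aestronglyMeasurable, by
      rw [hasFiniteIntegral_iff_ofReal hnn]; exact hfatou.trans_lt ENNReal.ofReal_lt_top⟩
  have hi' : Integrable (fun ω => l (X ω - s)) P := by
    refine (hi.add (integrable_const m)).congr (Eventually.of_forall fun ω => ?_)
    simp
  refine ⟨s, hi', ?_⟩
  have hMs : 0 ≤ M - s - m := by
    refine ge_of_tendsto' ((tendsto_const_nhds.sub hks).sub_const m) fun j => ?_
    have h : ∫ _, m ∂P ≤ ∫ ω, l (min (X ω) (c + k j) - r (k j)) ∂P :=
      integral_mono (integrable_const m) (hint (k j)) fun ω => hm _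
    simp only [integral_const, probReal_univ, one_smul] at h
    have := hr (k j)
    simp only [Function.comp]
    linarith
  rw [← ofReal_integral_eq_lintegral_ofReal hi hnn, ENNReal.ofReal_le_ofReal_iff hMs,
    integral_sub hi' (integrable_const m)] at hfatou
  simp only [integral_const, probReal_univ, one_smul] at hfatou
  linarith

/-- **Dual representation of the optimized certainty equivalent.** For a loss function `l`
satisfying (Al) and a random variable `X` bounded from below,
`ρ(X) = inf_r (E[l(X − r)] + r) = sup { E[Z X − l*(Z)] : Z ≥ 0 integrable, E[Z] = 1 }`. -/
theorem oce_dual_representation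
    {Ω : Type*} [MeasurableSpace Ω] (P : Measure Ω) [IsProbabilityMeasure P]
    (l : ℝ → ℝ) (hl : IsLossFunction l)
    (X : Ω → ℝ) (hX : Measurable X) (hXbd : ∃ c : ℝ, ∀ ω, c ≤ X ω) :
    oce P l X =
      ⨆ Z : {Z : Ω → ℝ // Integrable Z P ∧ (∀ᵐ ω ∂P, 0 ≤ Z ω) ∧ ∫ ω, Z ω ∂P = 1},
        eexp P (fun ω => ((Z.1 ω * X ω : ℝ) : EReal) - lstar l (Z.1 ω)) := by
  obtain ⟨c, hc⟩ := hXbd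
  obtain ⟨m, hm⟩ := hl.2.2.1
  have hm : ∀ x, m ≤ l x := fun x => hm (mem_range_self x)
  apply le_antisymm
  · set S := ⨆ Z : {Z : Ω → ℝ // Integrable Z P ∧ (∀ᵐ ω ∂P, 0 ≤ Z ω) ∧ ∫ ω, Z ω ∂P = 1},
        eexp P (fun ω => ((Z.1 ω * X ω : ℝ) : EReal) - lstar l (Z.1 ω)) with hS
    have hcn : ∀ (n : ℕ) ω, c ≤ min (X ω) (c + n) := fun n ω =>
      le_min (hc ω) (by linarith [n.cast_nonneg (α := ℝ)])
    choose r Z hZi hZ0 hZ1 hZl using fun n : ℕ =>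
      exists_density_of_bounded P hl (hX.min (measurable_const (a := c + (n : ℝ)))) (hcn n)
        (fun ω => min_le_right _ _)
    have hint : ∀ n : ℕ, Integrable (fun ω => l (min (X ω) (c + n) - r n)) P := fun n =>
      integrable_loss_sub hl.1 (hX.min measurable_const) (hcn n) (fun ω => min_le_right _ _) (r n)
    have hle : ∀ n : ℕ, ((∫ ω, l (min (X ω) (c + n) - r n) ∂P + r n : ℝ) : EReal) ≤ S := by
      intro n
      have hval : ∫ ω, (l (min (X ω) (c + n) - r n) + r n * Z n ω) ∂P
          = ∫ ω, l (min (X ω) (c + n) - r n) ∂P + r n := by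
        rw [integral_add (hint n) ((hZi n).const_mul _), integral_const_mul, hZ1, mul_one]
      rw [← hval, ← eexp_coe_of_integrable
        (f := fun ω => l (min (X ω) (c + n) - r n) + r n * Z n ω) ((hint n).add ((hZi n).const_mul (r n)))]
      refine le_trans (eexp_mono (Eventually.of_forall fun ω => ?_))
        (le_iSup (fun Z : {Z : Ω → ℝ // Integrable Z P ∧ (∀ᵐ ω ∂P, 0 ≤ Z ω) ∧
            ∫ ω, Z ω ∂P = 1} =>
          eexp P (fun ω => ((Z.1 ω * X ω : ℝ) : EReal) - lstar l (Z.1 ω)))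
          ⟨Z n, hZi n, Eventually.of_forall (hZ0 n), hZ1 n⟩)
      -- Equality in Fenchel–Young for the truncation, and `Z n * min X (c + n) ≤ Z n * X`.
      refine le_trans ?_ (EReal.sub_le_sub le_rfl (hZl n ω))
      rw [← EReal.coe_sub, EReal.coe_le_coe_iff]
      have := mul_le_mul_of_nonneg_left (min_le_left (X ω) (c + n)) (hZ0 n ω)
      linarith
    induction hSv : S with
    | bot => exact absurd (hSv ▸ hle 0) (by simp)
    | top => exact le_top
    | coe M =>
      obtain ⟨s, hsi, hs⟩ := exists_primal_le_of_truncations P hl hX hc r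
        (M := M) (fun n => by have := hle n; rw [hSv] at this; exact_mod_cast this)
      refine (iInf_le _ s).trans ?_
      rw [eexp_coe_of_integrable hsi]
      exact_mod_cast hs
  · refine iSup_le fun ⟨Z, hZi, hZ0, hZ1⟩ => le_iInf fun r => ?_
    by_cases hint : Integrable (fun ω => l (X ω - r)) P
    · have hval : ∫ ω, (l (X ω - r) + r * Z ω) ∂P = ∫ ω, l (X ω - r) ∂P + r := by
        rw [integral_add hint (hZi.const_mul _), integral_const_mul, hZ1, mul_one]
      rw [eexp_coe_of_integrable hint, ← EReal.coe_add, ← hval,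
        ← eexp_coe_of_integrable (f := fun ω => l (X ω - r) + r * Z ω)
          (hint.add (hZi.const_mul r))]
      refine eexp_mono (Eventually.of_forall fun ω => (sub_lstar_le l _ (X ω - r) _).trans ?_)
      rw [EReal.coe_le_coe_iff]
      exact le_of_eq (by ring)
    · rw [eexp_coe_of_not_integrable (f := fun ω => l (X ω - r))
        (hl.1.measurable.comp (hX.sub_const r)) (fun ω => hm _) hint,
        EReal.top_add_coe]
      exact le_top

end
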